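/- Let a* = ‖Q‖²_{L²} with Q the unique positive radial solution of −ΔQ + Q − Q³ = 0 on ℝ². Suppose w ∈ L¹(ℝ²) is even and satisfies ‖u‖²_{L²}‖∇u‖²_{L²} + (1/2)∬|u(x)|²|u(y)|² w(x−y) dx dy > 0 for all u ∈ H¹(ℝ²), u ≠ 0. Then ∫_{ℝ²} w ≥ −a*. -/

import Mathlib

open MeasureTheory

/-- The Laplacian on ℝ², as the trace of the second derivative. -/
noncomputable def lap2 (f : EuclideanSpace ℝ (Fin 2) → ℝ)
    (x : EuclideanSpace ℝ (Fin 2)) : ℝ :=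
  ∑ i : Fin 2,
    fderiv ℝ (fun y => fderiv ℝ f y (EuclideanSpace.single i (1 : ℝ))) x
      (EuclideanSpace.single i (1 : ℝ))

open Filter Topology Convolution

/-- The Euclidean plane. -/
local notation "Plane" => EuclideanSpace ℝ (Fin 2)

/-- The limiting energy `‖u‖²‖∇u‖² + (c/2)‖u‖₄⁴`, whose nonnegativity for all `u` is a
Gagliardo–Nirenberg inequality. -/
noncomputable def gagliardoNirenbergEnergy (c : ℝ) (u : EuclideanSpace ℝ (Fin 2) → ℝ) : ℝ :=
  (∫ x, u x ^ 2) * (∫ x, ‖fderiv ℝ u x‖ ^ 2) + 1 / 2 * (c * ∫ x, u x ^ 4)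

theorem norm_gradient {F : Type*} [NormedAddCommGroup F] [InnerProductSpace ℝ F]
    [CompleteSpace F] (f : F → ℝ) (x : F) : ‖gradient f x‖ = ‖fderiv ℝ f x‖ := by
  simp [gradient]

theorem norm_fderiv_sq_eq (f : Plane → ℝ) (x : Plane) :
    ‖fderiv ℝ f x‖ ^ 2 = fderiv ℝ f x (EuclideanSpace.single 0 1) ^ 2
      + fderiv ℝ f x (EuclideanSpace.single 1 1) ^ 2 := by
  have h (i : Fin 2) : fderiv ℝ f x (EuclideanSpace.single i 1) = gradient f x i := by
    have := InnerProductSpace.toDual_symm_apply (𝕜 := ℝ) (x := EuclideanSpace.single i (1 : ℝ))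
      (y := fderiv ℝ f x)
    rw [← this, real_inner_comm, EuclideanSpace.inner_single_left]
    simp [gradient]
  rw [← norm_gradient, EuclideanSpace.norm_sq_eq, Fin.sum_univ_two, h, h]
  simp

/-! ### Stability at small scales -/

theorem integral_scaled_interaction (w u : Plane → ℝ) {a : ℝ} (ha : 0 < a) :
    ∫ x, ∫ y, u (a • x) ^ 2 * u (a • y) ^ 2 * w (x - y)
      = (a ^ 2)⁻¹ * ∫ x, ∫ z, u x ^ 2 * u (x - a • z) ^ 2 * w z := by
  have h1 (x : Plane) : ∫ y, u (a • x) ^ 2 * u (a • y) ^ 2 * w (x - y)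
      = ∫ z, u (a • x) ^ 2 * u (a • x - a • z) ^ 2 * w z := by
    rw [← integral_sub_left_eq_self _ volume x]
    simp [smul_sub]
  simp_rw [h1]
  rw [Measure.integral_comp_smul volume
    (fun x => ∫ z, u x ^ 2 * u (x - a • z) ^ 2 * w z) a]
  simp [abs_of_pos ha]

theorem tendsto_interaction {w u : Plane → ℝ} (hw : Integrable w) (hu : Continuous u)
    (hc : HasCompactSupport u) {a : ℕ → ℝ} (ha : Tendsto a atTop (𝓝 0)) :
    Tendsto (fun n => ∫ x, ∫ z, u x ^ 2 * u (x - a n • z) ^ 2 * w z) atTop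
      (𝓝 ((∫ x, w x) * ∫ x, u x ^ 4)) := by
  obtain ⟨C, hC⟩ := hc.exists_bound_of_continuous hu
  have hC' (x : Plane) : u x ^ 2 ≤ C ^ 2 := by
    rw [← sq_abs]; exact pow_le_pow_left₀ (abs_nonneg _) (hC x) 2
  have hu2 : Integrable (fun x => u x ^ 2) := by
    simp_rw [sq]
    exact (hu.mul hu).integrable_of_hasCompactSupport hc.mul_left
  have hb : Integrable (fun p : Plane × Plane => u p.1 ^ 2 * (C ^ 2 * |w p.2|))
      (volume.prod volume) := hu2.mul_prod (hw.abs.const_mul _)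
  have hm (n : ℕ) : AEStronglyMeasurable
      (fun p : Plane × Plane => u p.1 ^ 2 * u (p.1 - a n • p.2) ^ 2 * w p.2)
      (volume.prod volume) := by
    refine AEStronglyMeasurable.mul ?_ hw.aestronglyMeasurable.comp_snd
    exact Continuous.aestronglyMeasurable (by fun_prop)
  have hle (n : ℕ) (p : Plane × Plane) :
      ‖u p.1 ^ 2 * u (p.1 - a n • p.2) ^ 2 * w p.2‖ ≤ u p.1 ^ 2 * (C ^ 2 * |w p.2|) := by
    rw [norm_mul, norm_mul, Real.norm_eq_abs, Real.norm_eq_abs, Real.norm_eq_abs, abs_sq, abs_sq,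
      mul_assoc]
    exact mul_le_mul_of_nonneg_left (mul_le_mul_of_nonneg_right (hC' _) (abs_nonneg _))
      (sq_nonneg _)
  have key := tendsto_integral_of_dominated_convergence (μ := volume.prod volume)
    (F := fun n (p : Plane × Plane) => u p.1 ^ 2 * u (p.1 - a n • p.2) ^ 2 * w p.2)
    (f := fun p => u p.1 ^ 4 * w p.2)
    (fun p : Plane × Plane => u p.1 ^ 2 * (C ^ 2 * |w p.2|)) hm hb
    (fun n => ae_of_all _ (hle n)) (ae_of_all _ fun p => by
      have : Continuous fun t : ℝ => u p.1 ^ 2 * u (p.1 - t • p.2) ^ 2 * w p.2 := by fun_prop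
      have h0 : u p.1 ^ 4 * w p.2 = u p.1 ^ 2 * u (p.1 - (0 : ℝ) • p.2) ^ 2 * w p.2 := by
        rw [zero_smul, sub_zero]
        ring
      rw [h0]
      exact (this.tendsto 0).comp ha)
  rw [integral_prod_mul (μ := volume) (ν := volume) (fun x : Plane => u x ^ 4) w, mul_comm] at key
  have hi (n : ℕ) : Integrable
      (fun p : Plane × Plane => u p.1 ^ 2 * u (p.1 - a n • p.2) ^ 2 * w p.2)
      (volume.prod volume) := hb.mono' (hm n) (ae_of_all _ (hle n))
  exact key.congr fun n => integral_prod _ (hi n)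

theorem gagliardoNirenbergEnergy_nonneg_of_stable {w : Plane → ℝ} (hw : Integrable w)
    (hstab : ∀ u : Plane → ℝ, ContDiff ℝ (⊤ : ℕ∞) u → HasCompactSupport u → u ≠ 0 →
      0 < (∫ x, u x ^ 2) * (∫ x, ‖gradient u x‖ ^ 2)
        + (1 / 2) * ∫ x, ∫ y, u x ^ 2 * u y ^ 2 * w (x - y))
    {u : Plane → ℝ} (hu : ContDiff ℝ (⊤ : ℕ∞) u) (hc : HasCompactSupport u) :
    0 ≤ gagliardoNirenbergEnergy (∫ x, w x) u := by
  rcases eq_or_ne u 0 with rfl | hu0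
  · simp [gagliardoNirenbergEnergy]
  have hpos (a : ℝ) (ha : 0 < a) : 0 ≤ (∫ x, u x ^ 2) * (∫ x, ‖fderiv ℝ u x‖ ^ 2)
      + 1 / 2 * ∫ x, ∫ z, u x ^ 2 * u (x - a • z) ^ 2 * w z := by
    have h := hstab (fun x => u (a • x)) (hu.comp (contDiff_const_smul a))
      (hc.comp_homeomorph (Homeomorph.smulOfNeZero a ha.ne')) (by
        obtain ⟨x, hx⟩ := Function.ne_iff.1 hu0
        refine Function.ne_iff.2 ⟨a⁻¹ • x, ?_⟩
        simpa [smul_smul, ha.ne'] using hx)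
    rw [integral_scaled_interaction w u ha,
      Measure.integral_comp_smul volume (fun x => u x ^ 2) a] at h
    have hg (x : Plane) : ‖gradient (fun x => u (a • x)) x‖ ^ 2
        = a ^ 2 * ‖fderiv ℝ u (a • x)‖ ^ 2 := by
      rw [norm_gradient, fderiv_comp_smul, norm_smul, mul_pow, Real.norm_eq_abs, sq_abs]
    simp_rw [hg] at h
    rw [integral_const_mul,
      Measure.integral_comp_smul volume (fun x => ‖fderiv ℝ u x‖ ^ 2) a] at h
    simp only [finrank_euclideanSpace, Fintype.card_fin, smul_eq_mul, abs_inv, abs_sq] at h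
    have ha2 : 0 < (a ^ 2)⁻¹ := by positivity
    refine (pos_of_mul_pos_right (a := (a ^ 2)⁻¹) ?_ ha2.le).le
    rw [mul_inv_cancel_left₀ (by positivity)] at h
    linear_combination h
  have ht : Tendsto (fun n : ℕ => 1 / ((n : ℝ) + 1)) atTop (𝓝 0) :=
    tendsto_one_div_add_atTop_nhds_zero_nat
  exact ge_of_tendsto' (((tendsto_interaction hw hu.continuous hc ht).const_mul (1 / 2)).const_add
    ((∫ x, u x ^ 2) * (∫ x, ‖fderiv ℝ u x‖ ^ 2))) fun n => hpos _ (by positivity)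

/-! ### Passing to less regular functions -/

theorem gagliardoNirenbergEnergy_nonneg_of_tendsto {c : ℝ} {u : ℕ → Plane → ℝ} {v b d : Plane → ℝ}
    (hu : ∀ n, ContDiff ℝ 1 (u n)) (hE : ∀ n, 0 ≤ gagliardoNirenbergEnergy c (u n))
    (hb : ∀ n x, |u n x| ≤ b x) (hd : ∀ n x, ‖fderiv ℝ (u n) x‖ ≤ d x)
    (hb2 : Integrable fun x => b x ^ 2) (hb4 : Integrable fun x => b x ^ 4)
    (hd2 : Integrable fun x => d x ^ 2)
    (hlim : ∀ x, Tendsto (fun n => u n x) atTop (𝓝 (v x)))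
    (hlim' : ∀ x, Tendsto (fun n => fderiv ℝ (u n) x) atTop (𝓝 (fderiv ℝ v x))) :
    0 ≤ gagliardoNirenbergEnergy c v := by
  have hpow (k : ℕ) (hbk : Integrable fun x => b x ^ k) :
      Tendsto (fun n => ∫ x, u n x ^ k) atTop (𝓝 (∫ x, v x ^ k)) :=
    tendsto_integral_of_dominated_convergence (fun x => b x ^ k)
      (fun n => ((hu n).continuous.pow k).aestronglyMeasurable) hbk
      (fun n => ae_of_all _ fun x => by
        rw [norm_pow]; exact pow_le_pow_left₀ (norm_nonneg _) (hb n x) k)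
      (ae_of_all _ fun x => (hlim x).pow k)
  have hgrad : Tendsto (fun n => ∫ x, ‖fderiv ℝ (u n) x‖ ^ 2) atTop
      (𝓝 (∫ x, ‖fderiv ℝ v x‖ ^ 2)) :=
    tendsto_integral_of_dominated_convergence (fun x => d x ^ 2)
      (fun n => (((hu n).continuous_fderiv one_ne_zero).norm.pow 2).aestronglyMeasurable) hd2
      (fun n => ae_of_all _ fun x => by
        rw [norm_pow, norm_norm]; exact pow_le_pow_left₀ (norm_nonneg _) (hd n x) 2)
      (ae_of_all _ fun x => (hlim' x).norm.pow 2)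
  exact ge_of_tendsto' (((hpow 2 hb2).mul hgrad).add (((hpow 4 hb4).const_mul c).const_mul (1 / 2)))
    hE

theorem norm_normed_convolution_le {G F : Type*} [NormedAddCommGroup G] [InnerProductSpace ℝ G]
    [FiniteDimensional ℝ G] [MeasurableSpace G] [BorelSpace G] (μ : Measure G)
    [μ.IsAddHaarMeasure] [NormedAddCommGroup F] [NormedSpace ℝ F] [CompleteSpace F]
    (φ : ContDiffBump (0 : G)) {g : G → F} (hg : Continuous g) {C : ℝ} (hC : ∀ x, ‖g x‖ ≤ C)
    (x : G) : ‖(φ.normed μ ⋆[ContinuousLinearMap.lsmul ℝ ℝ, μ] g) x‖ ≤ 3 * C := by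
  have h := φ.dist_normed_convolution_le (x₀ := x) (ε := C + C) (μ := μ) hg.aestronglyMeasurable
    fun y _ => (dist_le_norm_add_norm _ _).trans (add_le_add (hC y) (hC x))
  rw [dist_eq_norm] at h
  linarith [norm_le_norm_sub_add ((φ.normed μ ⋆[ContinuousLinearMap.lsmul ℝ ℝ, μ] g) x) (g x), hC x]

theorem gagliardoNirenbergEnergy_nonneg_of_contDiff_one {c : ℝ}
    (hE : ∀ u : Plane → ℝ, ContDiff ℝ (⊤ : ℕ∞) u → HasCompactSupport u →
      0 ≤ gagliardoNirenbergEnergy c u)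
    {v : Plane → ℝ} (hv : ContDiff ℝ 1 v) (hc : HasCompactSupport v) :
    0 ≤ gagliardoNirenbergEnergy c v := by
  have hv' : Continuous (fderiv ℝ v) := hv.continuous_fderiv one_ne_zero
  obtain ⟨A, hA⟩ := hc.exists_bound_of_continuous hv.continuous
  obtain ⟨B, hB⟩ := (hc.fderiv ℝ).exists_bound_of_continuous hv'
  have hr (n : ℕ) : (0 : ℝ) < 1 / ((n : ℝ) + 1) := by positivity
  let φ (n : ℕ) : ContDiffBump (0 : Plane) :=
    ⟨1 / ((n : ℝ) + 1) / 2, 1 / ((n : ℝ) + 1), half_pos (hr n), half_lt_self (hr n)⟩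
  have hφ : Tendsto (fun n => (φ n).rOut) atTop (𝓝 0) := tendsto_one_div_add_atTop_nhds_zero_nat
  let u (n : ℕ) : Plane → ℝ := (φ n).normed volume ⋆[ContinuousLinearMap.lsmul ℝ ℝ, volume] v
  have hu (n : ℕ) : ContDiff ℝ (⊤ : ℕ∞) (u n) :=
    (φ n).hasCompactSupport_normed.contDiff_convolution_left _ (φ n).contDiff_normed
      hv.continuous.locallyIntegrable
  have hu' (n : ℕ) : fderiv ℝ (u n)
      = (φ n).normed volume ⋆[ContinuousLinearMap.lsmul ℝ ℝ, volume] fderiv ℝ v := by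
    ext1 x
    rw [(hc.hasFDerivAt_convolution_right (ContinuousLinearMap.lsmul ℝ ℝ)
      ((φ n).continuous_normed.locallyIntegrable) hv x).fderiv]
    rfl
  obtain ⟨R, hR⟩ := hc.isCompact.isBounded.subset_closedBall (0 : Plane)
  have hcs (n : ℕ) : Function.support (u n) ⊆ Metric.closedBall 0 (1 + R) := by
    refine (support_convolution_subset _).trans ?_
    rintro _ ⟨y, hy, z, hz, rfl⟩
    rw [(φ n).support_normed_eq] at hy
    have hy' := mem_ball_zero_iff.1 hy
    have hz' := mem_closedBall_zero_iff.1 (hR (subset_tsupport _ hz))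
    have h1 : (φ n).rOut ≤ 1 := by
      change 1 / ((n : ℝ) + 1) ≤ 1
      rw [div_le_one (by positivity)]
      linarith [n.cast_nonneg (α := ℝ)]
    rw [mem_closedBall_zero_iff]
    linarith [norm_add_le y z]
  have hts (n : ℕ) : tsupport (u n) ⊆ Metric.closedBall 0 (1 + R) :=
    closure_minimal (hcs n) Metric.isClosed_closedBall
  have huc (n : ℕ) : HasCompactSupport (u n) :=
    (isCompact_closedBall _ _).of_isClosed_subset isClosed_closure (hts n)
  have hint (C : ℝ) (k : ℕ) (hk : k ≠ 0) : Integrable fun x : Plane =>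
      (Metric.closedBall (0 : Plane) (1 + R)).indicator (fun _ => C) x ^ k := by
    have : (fun x : Plane => (Metric.closedBall (0 : Plane) (1 + R)).indicator (fun _ => C) x ^ k)
        = (Metric.closedBall (0 : Plane) (1 + R)).indicator (fun _ => C ^ k) := by
      ext x
      by_cases hx : x ∈ Metric.closedBall (0 : Plane) (1 + R)
      · rw [Set.indicator_of_mem hx, Set.indicator_of_mem hx]
      · rw [Set.indicator_of_notMem hx, Set.indicator_of_notMem hx, zero_pow hk]
    rw [this]
    exact (integrable_indicator_iff Metric.isClosed_closedBall.measurableSet).2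
      (integrableOn_const (isCompact_closedBall _ _).measure_lt_top.ne)
  refine gagliardoNirenbergEnergy_nonneg_of_tendsto (u := u)
    (b := (Metric.closedBall (0 : Plane) (1 + R)).indicator fun _ => 3 * A)
    (d := (Metric.closedBall (0 : Plane) (1 + R)).indicator fun _ => 3 * B)
    (fun n => (hu n).of_le (by exact_mod_cast le_top)) (fun n => hE _ (hu n) (huc n))
    (fun n x => ?_) (fun n x => ?_) (hint _ 2 two_ne_zero) (hint _ 4 four_ne_zero)
    (hint _ 2 two_ne_zero) (fun x => ?_) fun x => ?_
  · by_cases hx : x ∈ Metric.closedBall (0 : Plane) (1 + R)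
    · rw [Set.indicator_of_mem hx]
      exact norm_normed_convolution_le volume (φ n) hv.continuous hA x
    · rw [Set.indicator_of_notMem hx, Function.notMem_support.1 fun h => hx (hcs n h), abs_zero]
  · by_cases hx : x ∈ Metric.closedBall (0 : Plane) (1 + R)
    · rw [Set.indicator_of_mem hx, hu']
      exact norm_normed_convolution_le volume (φ n) hv' hB x
    · rw [Set.indicator_of_notMem hx, fderiv_of_notMem_tsupport (𝕜 := ℝ) fun h => hx (hts n h),
        norm_zero]
  · exact ContDiffBump.convolution_tendsto_right_of_continuous hφ hv.continuous x
  · simp_rw [hu']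
    exact ContDiffBump.convolution_tendsto_right_of_continuous hφ hv' x

theorem exists_seq_cutoff (F : Type*) [NormedAddCommGroup F] [InnerProductSpace ℝ F]
    [FiniteDimensional ℝ F] : ∃ (χ : ℕ → F → ℝ) (C : ℝ), (∀ n, ContDiff ℝ 2 (χ n)) ∧
      (∀ n, HasCompactSupport (χ n)) ∧ (∀ n x, |χ n x| ≤ 1) ∧
      (∀ n x, ‖fderiv ℝ (χ n) x‖ * (1 + ‖x‖) ≤ C) ∧
      (∀ x, Tendsto (fun n => χ n x) atTop (𝓝 1)) ∧
      ∀ x, Tendsto (fun n => fderiv ℝ (χ n) x) atTop (𝓝 0) := by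
  let φ : ContDiffBump (0 : F) := ⟨1, 2, one_pos, one_lt_two⟩
  let a (n : ℕ) : ℝ := 1 / ((n : ℝ) + 1)
  have ha0 (n : ℕ) : 0 < a n := by positivity
  have ha1 (n : ℕ) : a n ≤ 1 := by
    change 1 / ((n : ℝ) + 1) ≤ 1
    rw [div_le_one (by positivity)]
    linarith [n.cast_nonneg (α := ℝ)]
  have ha : Tendsto a atTop (𝓝 0) := tendsto_one_div_add_atTop_nhds_zero_nat
  have hφ : ContDiff ℝ 2 φ := φ.contDiff
  have hφ' : Continuous (fderiv ℝ φ) := hφ.continuous_fderiv two_ne_zero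
  have hd (n : ℕ) (x : F) : fderiv ℝ (fun x => φ (a n • x)) x = a n • fderiv ℝ φ (a n • x) :=
    fderiv_comp_smul (𝕜 := ℝ) (f := φ) (a n)
  have hs (x : F) : Tendsto (fun n => a n • x) atTop (𝓝 0) := by
    simpa using ha.smul_const x
  obtain ⟨C, hC⟩ : ∃ C, ∀ x : F, ‖(1 + ‖x‖) • fderiv ℝ φ x‖ ≤ C :=
    ((φ.hasCompactSupport.fderiv ℝ).smul_left (f := fun x : F => 1 + ‖x‖)).exists_bound_of_continuous
      ((continuous_const.add continuous_norm).smul hφ')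
  refine ⟨fun n x => φ (a n • x), C, fun n => hφ.comp (contDiff_const_smul _),
    fun n => φ.hasCompactSupport.comp_homeomorph (Homeomorph.smulOfNeZero (a n) (ha0 n).ne'),
    fun n x => ?_, fun n x => ?_, fun x => ?_, fun x => ?_⟩
  · rw [abs_of_nonneg φ.nonneg]
    exact φ.le_one
  · refine le_trans ?_ (hC (a n • x))
    have h0 : 0 ≤ (1 : ℝ) + ‖a n • x‖ := by positivity
    rw [hd, norm_smul, norm_smul, Real.norm_of_nonneg (ha0 n).le, Real.norm_of_nonneg h0, norm_smul,
      Real.norm_of_nonneg (ha0 n).le, mul_right_comm]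
    refine mul_le_mul_of_nonneg_right ?_ (norm_nonneg _)
    linarith [ha1 n]
  · have h := (φ.continuous.tendsto 0).comp (hs x)
    rwa [φ.one_of_mem_closedBall (Metric.mem_closedBall_self φ.rIn_pos.le)] at h
  · simp_rw [hd]
    simpa using ha.smul ((hφ'.tendsto 0).comp (hs x))

theorem gagliardoNirenbergEnergy_nonneg_of_integrable {c : ℝ}
    (hE : ∀ v : Plane → ℝ, ContDiff ℝ 1 v → HasCompactSupport v →
      0 ≤ gagliardoNirenbergEnergy c v)
    {Q : Plane → ℝ} (hQ : ContDiff ℝ 1 Q) (hQ2 : Integrable fun x => Q x ^ 2)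
    (hQ4 : Integrable fun x => Q x ^ 4) (hQ' : Integrable fun x => ‖fderiv ℝ Q x‖ ^ 2) :
    0 ≤ gagliardoNirenbergEnergy c Q := by
  obtain ⟨χ, C, hχ, hχc, hχ1, hχ', hlim, hlim'⟩ := exists_seq_cutoff Plane
  have hχ1' (n : ℕ) : ContDiff ℝ 1 (χ n) := (hχ n).of_le one_le_two
  have hd (n : ℕ) (x : Plane) :
      fderiv ℝ (fun x => χ n x * Q x) x = χ n x • fderiv ℝ Q x + Q x • fderiv ℝ (χ n) x :=
    fderiv_fun_mul ((hχ1' n).differentiable one_ne_zero x) (hQ.differentiable one_ne_zero x)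
  have hC (n : ℕ) (x : Plane) : ‖fderiv ℝ (χ n) x‖ ≤ C := by
    refine le_trans ?_ (hχ' n x)
    nlinarith [norm_nonneg (fderiv ℝ (χ n) x), norm_nonneg x]
  have hQc := hQ.continuous
  have hQc' := hQ.continuous_fderiv one_ne_zero
  refine gagliardoNirenbergEnergy_nonneg_of_tendsto (u := fun n x => χ n x * Q x)
    (b := fun x => |Q x|) (d := fun x => ‖fderiv ℝ Q x‖ + |Q x| * C)
    (fun n => (hχ1' n).mul hQ) (fun n => hE _ ((hχ1' n).mul hQ) (hχc n).mul_right)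
    (fun n x => ?_) (fun n x => ?_) (by simpa only [sq_abs] using hQ2) (by
      have h (x : Plane) : |Q x| ^ 4 = Q x ^ 4 := Even.pow_abs (by decide) _
      simpa only [h] using hQ4) ?_ (fun x => ?_) fun x => ?_
  · rw [abs_mul]
    exact mul_le_of_le_one_left (abs_nonneg _) (hχ1 n x)
  · rw [hd]
    refine (norm_add_le _ _).trans (add_le_add ?_ ?_)
    · rw [norm_smul]
      exact mul_le_of_le_one_left (norm_nonneg _) (hχ1 n x)
    · rw [norm_smul]
      exact mul_le_mul_of_nonneg_left (hC n x) (norm_nonneg _)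
  · refine ((hQ'.const_mul 2).add (hQ2.const_mul (2 * C ^ 2))).mono' ?_ (ae_of_all _ fun x => ?_)
    · exact Continuous.aestronglyMeasurable (by fun_prop)
    · rw [Real.norm_of_nonneg (sq_nonneg _)]
      simp only [Pi.add_apply]
      nlinarith [sq_nonneg (‖fderiv ℝ Q x‖ - |Q x| * C), sq_abs (Q x)]
  · simpa using (hlim x).mul_const (Q x)
  · simp_rw [hd]
    simpa using ((hlim x).smul_const (fderiv ℝ Q x)).add ((hlim' x).const_smul (Q x))

/-! ### Virial identities for the ground state -/

theorem integral_divergence_eq_zero {V : Fin 2 → Plane → ℝ} {g : Plane → ℝ}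
    (hV : ∀ i, ContDiff ℝ 1 (V i)) (hg : Integrable g)
    (hle : ∀ i x, |V i x| ≤ (1 + ‖x‖) * g x)
    (hD : Integrable fun x => ∑ i, fderiv ℝ (V i) x (EuclideanSpace.single i 1)) :
    ∫ x, ∑ i, fderiv ℝ (V i) x (EuclideanSpace.single i 1) = 0 := by
  obtain ⟨χ, C, hχ, hχc, hχ1, hχ', hlim, hlim'⟩ := exists_seq_cutoff Plane
  have hχd (n : ℕ) : Continuous (fderiv ℝ (χ n)) := (hχ n).continuous_fderiv two_ne_zero
  have hVd (i : Fin 2) : Continuous (fderiv ℝ (V i)) := (hV i).continuous_fderiv one_ne_zero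
  have hχcont (n : ℕ) : Continuous (χ n) := (hχ n).continuous
  have hVcont (i : Fin 2) : Continuous (V i) := (hV i).continuous
  have hg0 (x : Plane) : 0 ≤ g x := by
    have := (abs_nonneg _).trans (hle 0 x)
    exact nonneg_of_mul_nonneg_right this (by positivity)
  have h1 (n : ℕ) (i : Fin 2) :
      Integrable fun x => fderiv ℝ (χ n) x (EuclideanSpace.single i 1) * V i x := by
    refine Continuous.integrable_of_hasCompactSupport (by fun_prop) ?_
    exact ((hχc n).fderiv_apply ℝ _).mul_right
  have h2 (n : ℕ) (i : Fin 2) :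
      Integrable fun x => χ n x * fderiv ℝ (V i) x (EuclideanSpace.single i 1) := by
    refine Continuous.integrable_of_hasCompactSupport (by fun_prop) ?_
    exact (hχc n).mul_right
  have h3 (n : ℕ) (i : Fin 2) : Integrable fun x => χ n x * V i x := by
    refine Continuous.integrable_of_hasCompactSupport (by fun_prop) ?_
    exact (hχc n).mul_right
  have hparts (n : ℕ) : ∫ x, χ n x * ∑ i, fderiv ℝ (V i) x (EuclideanSpace.single i 1)
      = -∫ x, ∑ i, fderiv ℝ (χ n) x (EuclideanSpace.single i 1) * V i x := by
    simp_rw [Finset.mul_sum]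
    rw [integral_finsetSum _ fun i _ => h2 n i, integral_finsetSum _ fun i _ => h1 n i,
      ← Finset.sum_neg_distrib]
    exact Finset.sum_congr rfl fun i _ => integral_mul_fderiv_eq_neg_fderiv_mul_of_integrable
      (h1 n i) (h2 n i) (h3 n i) (fun x _ => (hχ n).differentiable two_ne_zero x)
      (fun x _ => (hV i).differentiable one_ne_zero x)
  have hL : Tendsto (fun n => ∫ x, χ n x * ∑ i, fderiv ℝ (V i) x (EuclideanSpace.single i 1))
      atTop (𝓝 (∫ x, ∑ i, fderiv ℝ (V i) x (EuclideanSpace.single i 1))) := by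
    refine tendsto_integral_of_dominated_convergence
      (fun x => ‖∑ i, fderiv ℝ (V i) x (EuclideanSpace.single i 1)‖)
      (fun n => (hχcont n).aestronglyMeasurable.mul hD.aestronglyMeasurable) hD.norm
      (fun n => ae_of_all _ fun x => ?_) (ae_of_all _ fun x => ?_)
    · rw [norm_mul]
      exact mul_le_of_le_one_left (norm_nonneg _) (hχ1 n x)
    · simpa only [one_mul] using
        (hlim x).mul_const (∑ i, fderiv ℝ (V i) x (EuclideanSpace.single i 1))
  have hR : Tendsto (fun n => ∫ x, ∑ i, fderiv ℝ (χ n) x (EuclideanSpace.single i 1) * V i x)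
      atTop (𝓝 (∫ _ : Plane, (0 : ℝ))) := by
    refine tendsto_integral_of_dominated_convergence (fun x => ∑ _i : Fin 2, C * g x)
      (fun n => (integrable_finsetSum _ fun i _ => h1 n i).aestronglyMeasurable)
      (integrable_finsetSum _ fun i _ => hg.const_mul C)
      (fun n => ae_of_all _ fun x => ?_) (ae_of_all _ fun x => ?_)
    · refine norm_sum_le_of_le _ fun i _ => ?_
      have he : ‖fderiv ℝ (χ n) x (EuclideanSpace.single i 1)‖ ≤ ‖fderiv ℝ (χ n) x‖ := by
        simpa using (fderiv ℝ (χ n) x).le_opNorm (EuclideanSpace.single i 1)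
      rw [norm_mul]
      calc _ ≤ ‖fderiv ℝ (χ n) x‖ * ((1 + ‖x‖) * g x) :=
            mul_le_mul he (hle i x) (abs_nonneg _) (norm_nonneg _)
        _ = ‖fderiv ℝ (χ n) x‖ * (1 + ‖x‖) * g x := (mul_assoc _ _ _).symm
        _ ≤ C * g x := mul_le_mul_of_nonneg_right (hχ' n x) (hg0 x)
    · have hi (i : Fin 2) : Tendsto
          (fun n => fderiv ℝ (χ n) x (EuclideanSpace.single i 1) * V i x) atTop (𝓝 0) := by
        have h := (((ContinuousLinearMap.apply ℝ ℝ
          (EuclideanSpace.single i 1 : Plane)).continuous.tendsto 0).comp (hlim' x)).mul_const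
            (V i x)
        simpa using h
      simpa using tendsto_finsetSum Finset.univ fun i _ => hi i
  refine tendsto_nhds_unique hL ?_
  simp_rw [hparts]
  simpa using hR.neg

section GroundState

variable {Q : EuclideanSpace ℝ (Fin 2) → ℝ}

theorem contDiff_fderiv_apply_const (hQ : ContDiff ℝ 2 Q) (v : Plane) :
    ContDiff ℝ 1 fun y => fderiv ℝ Q y v :=
  (hQ.fderiv_right (m := 1) (by norm_num)).clm_apply contDiff_const

theorem integral_norm_fderiv_sq_eq (hQ : ContDiff ℝ 2 Q) (hQ2 : Integrable fun x => Q x ^ 2)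
    (hQ' : Integrable fun x => ‖fderiv ℝ Q x‖ ^ 2) (hQ4 : Integrable fun x => Q x ^ 4)
    (hpde : ∀ x, -lap2 Q x + Q x - Q x ^ 3 = 0) :
    ∫ x, ‖fderiv ℝ Q x‖ ^ 2 = (∫ x, Q x ^ 4) - ∫ x, Q x ^ 2 := by
  let p (j : Fin 2) (y : Plane) : ℝ := fderiv ℝ Q y (EuclideanSpace.single j 1)
  have hp (j : Fin 2) : ContDiff ℝ 1 (p j) := contDiff_fderiv_apply_const hQ _
  have hQ1 : ContDiff ℝ 1 Q := hQ.of_le one_le_two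
  have hn (x : Plane) : ‖fderiv ℝ Q x‖ ^ 2 = p 0 x ^ 2 + p 1 x ^ 2 := norm_fderiv_sq_eq Q x
  have hdiv (x : Plane) :
      ∑ i, fderiv ℝ (fun y => Q y * p i y) x (EuclideanSpace.single i 1)
        = ‖fderiv ℝ Q x‖ ^ 2 + Q x ^ 2 - Q x ^ 4 := by
    have hi (i : Fin 2) : fderiv ℝ (fun y => Q y * p i y) x (EuclideanSpace.single i 1)
        = Q x * fderiv ℝ (p i) x (EuclideanSpace.single i 1) + p i x * p i x := by
      rw [fderiv_fun_mul (hQ1.differentiable one_ne_zero x) ((hp i).differentiable one_ne_zero x)]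
      rfl
    have h := hpde x
    simp only [lap2, Fin.sum_univ_two] at h
    rw [Fin.sum_univ_two, hi, hi, hn]
    linear_combination -Q x * h
  have hI : Integrable fun x => ‖fderiv ℝ Q x‖ ^ 2 + Q x ^ 2 - Q x ^ 4 := (hQ'.add hQ2).sub hQ4
  have key := integral_divergence_eq_zero (V := fun i y => Q y * p i y)
    (g := fun x => ‖fderiv ℝ Q x‖ ^ 2 + Q x ^ 2) (fun i => hQ1.mul (hp i)) (hQ'.add hQ2)
    (fun i x => by
      have h : |Q x * p i x| ≤ ‖fderiv ℝ Q x‖ ^ 2 + Q x ^ 2 := by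
        rw [hn, abs_le]
        fin_cases i <;> constructor <;> simp only [Fin.zero_eta, Fin.mk_one] <;>
          nlinarith [sq_nonneg (Q x + p 0 x), sq_nonneg (Q x - p 0 x), sq_nonneg (Q x + p 1 x),
            sq_nonneg (Q x - p 1 x), sq_nonneg (p 0 x), sq_nonneg (p 1 x), sq_nonneg (Q x)]
      refine h.trans (le_mul_of_one_le_left (by positivity) ?_)
      linarith [norm_nonneg x])
    (by simpa only [hdiv] using hI)
  simp_rw [hdiv] at key
  have hadd : Integrable fun x => ‖fderiv ℝ Q x‖ ^ 2 + Q x ^ 2 := hQ'.add hQ2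
  rw [integral_sub hadd hQ4, integral_add hQ' hQ2] at key
  linarith

/-- Pohozaev's identity in the plane. -/
theorem integral_pow_four_eq (hQ : ContDiff ℝ 2 Q) (hQ2 : Integrable fun x => Q x ^ 2)
    (hQ' : Integrable fun x => ‖fderiv ℝ Q x‖ ^ 2) (hQ4 : Integrable fun x => Q x ^ 4)
    (hpde : ∀ x, -lap2 Q x + Q x - Q x ^ 3 = 0) :
    ∫ x, Q x ^ 4 = 2 * ∫ x, Q x ^ 2 := by
  let p (j : Fin 2) (y : Plane) : ℝ := fderiv ℝ Q y (EuclideanSpace.single j 1)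
  let V (i : Fin 2) (y : Plane) : ℝ := (y 0 * p 0 y + y 1 * p 1 y) * p i y
    + y i * (4⁻¹ * (Q y * Q y * (Q y * Q y)) - 2⁻¹ * (Q y * Q y)
      - 2⁻¹ * (p 0 y * p 0 y + p 1 y * p 1 y))
  have hp (j : Fin 2) : ContDiff ℝ 1 (p j) := contDiff_fderiv_apply_const hQ _
  have hQ1 : ContDiff ℝ 1 Q := hQ.of_le one_le_two
  have hn (x : Plane) : ‖fderiv ℝ Q x‖ ^ 2 = p 0 x ^ 2 + p 1 x ^ 2 := norm_fderiv_sq_eq Q x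
  have hc (j : Fin 2) : ContDiff ℝ 1 fun y : Plane => y j :=
    (EuclideanSpace.proj (𝕜 := ℝ) j).contDiff
  have hV (i : Fin 2) : ContDiff ℝ 1 (V i) := by fun_prop
  have hsymm (x : Plane) : fderiv ℝ (p 0) x (EuclideanSpace.single 1 1)
      = fderiv ℝ (p 1) x (EuclideanSpace.single 0 1) := by
    have hdd : DifferentiableAt ℝ (fderiv ℝ Q) x :=
      (hQ.fderiv_right (m := 1) (by norm_num)).differentiable one_ne_zero x
    have he (i j : Fin 2) : fderiv ℝ (p i) x (EuclideanSpace.single j 1)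
        = fderiv ℝ (fderiv ℝ Q) x (EuclideanSpace.single j 1) (EuclideanSpace.single i 1) := by
      simp only [p]
      rw [fderiv_clm_apply hdd (differentiableAt_const _)]
      simp
    rw [he, he]
    exact (hQ.contDiffAt.isSymmSndFDerivAt (by simp)) _ _
  have hdiv (x : Plane) : ∑ i, fderiv ℝ (V i) x (EuclideanSpace.single i 1)
      = 2⁻¹ * Q x ^ 4 - Q x ^ 2 := by
    have hq : HasFDerivAt Q (fderiv ℝ Q x) x := (hQ1.differentiable one_ne_zero x).hasFDerivAt
    have hpd (j : Fin 2) : HasFDerivAt (p j) (fderiv ℝ (p j) x) x :=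
      ((hp j).differentiable one_ne_zero x).hasFDerivAt
    have hcd (j : Fin 2) :
        HasFDerivAt (fun y : Plane => y j) (EuclideanSpace.proj (𝕜 := ℝ) j) x :=
      (EuclideanSpace.proj (𝕜 := ℝ) j).hasFDerivAt
    have hq2 := hq.mul hq
    have hVd (i : Fin 2) := ((((hcd 0).mul (hpd 0)).add ((hcd 1).mul (hpd 1))).mul (hpd i)).add
      ((hcd i).mul ((((hq2.mul hq2).const_mul 4⁻¹).sub (hq2.const_mul 2⁻¹)).sub
        ((((hpd 0).mul (hpd 0)).add ((hpd 1).mul (hpd 1))).const_mul 2⁻¹)))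
    have hq0 : fderiv ℝ Q x (EuclideanSpace.single 0 1) = p 0 x := rfl
    have hq1 : fderiv ℝ Q x (EuclideanSpace.single 1 1) = p 1 x := rfl
    have h := hpde x
    simp only [lap2, Fin.sum_univ_two] at h
    change -(fderiv ℝ (p 0) x _ + fderiv ℝ (p 1) x _) + Q x - Q x ^ 3 = 0 at h
    have e0 : fderiv ℝ (V 0) x = _ := (hVd 0).fderiv
    have e1 : fderiv ℝ (V 1) x = _ := (hVd 1).fderiv
    rw [Fin.sum_univ_two, e0, e1]
    simp [hq0, hq1, hsymm]
    linear_combination -(x 0 * p 0 x + x 1 * p 1 x) * h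
  have hI : Integrable fun x => 2⁻¹ * Q x ^ 4 - Q x ^ 2 := (hQ4.const_mul _).sub hQ2
  have key := integral_divergence_eq_zero (V := V)
    (g := fun x => 3 * ‖fderiv ℝ Q x‖ ^ 2 + Q x ^ 2 + Q x ^ 4) hV
    (((hQ'.const_mul 3).add hQ2).add hQ4) (fun i x => by
      have hx (j : Fin 2) : |x j| ≤ ‖x‖ := PiLp.norm_apply_le x j
      have hpp (j k : Fin 2) : |p j x * p k x| ≤ ‖fderiv ℝ Q x‖ ^ 2 := by
        rw [hn, abs_le]
        fin_cases j <;> fin_cases k <;> constructor <;>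
          simp only [Fin.zero_eta, Fin.mk_one] <;>
          nlinarith [sq_nonneg (p 0 x + p 1 x), sq_nonneg (p 0 x - p 1 x), sq_nonneg (p 0 x),
            sq_nonneg (p 1 x)]
      have hb (j : Fin 2) : |x j * (p j x * p i x)| ≤ ‖x‖ * ‖fderiv ℝ Q x‖ ^ 2 := by
        rw [abs_mul]
        exact mul_le_mul (hx j) (hpp j i) (abs_nonneg _) (norm_nonneg _)
      have hl : |4⁻¹ * (Q x * Q x * (Q x * Q x)) - 2⁻¹ * (Q x * Q x)
          - 2⁻¹ * (p 0 x * p 0 x + p 1 x * p 1 x)|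
          ≤ ‖fderiv ℝ Q x‖ ^ 2 + Q x ^ 2 + Q x ^ 4 := by
        have e4 : Q x * Q x * (Q x * Q x) = Q x ^ 4 := by ring
        have h4 : 0 ≤ Q x ^ 4 := by positivity
        rw [hn, abs_le, e4]
        constructor <;>
          nlinarith [sq_nonneg (p 0 x), sq_nonneg (p 1 x), sq_nonneg (Q x)]
      have hm := mul_le_mul (hx i) hl (abs_nonneg _) (norm_nonneg _)
      rw [← abs_mul] at hm
      have e : V i x = x 0 * (p 0 x * p i x) + x 1 * (p 1 x * p i x)
          + x i * (4⁻¹ * (Q x * Q x * (Q x * Q x)) - 2⁻¹ * (Q x * Q x)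
            - 2⁻¹ * (p 0 x * p 0 x + p 1 x * p 1 x)) := by
        simp only [V]
        ring
      have hg : 0 ≤ 3 * ‖fderiv ℝ Q x‖ ^ 2 + Q x ^ 2 + Q x ^ 4 := by positivity
      rw [e]
      refine (abs_add_three _ _ _).trans ?_
      linarith [hb 0, hb 1])
    (by simpa only [hdiv] using hI)
  simp_rw [hdiv] at key
  rw [integral_sub (hQ4.const_mul _) hQ2, integral_const_mul] at key
  linarith

end GroundState

/-- If the 2D many-body stability condition
`‖u‖² ‖∇u‖² + (1/2) ∬ |u(x)|²|u(y)|² w(x−y) > 0` holds for all nonzero test functions `u`,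
then `∫ w ≥ −a*`, where `a* = ‖Q‖²_{L²}` is the critical coupling constant of the 2D cubic
NLS, `Q` being the positive radial solution of `−ΔQ + Q − Q³ = 0`. -/
theorem stmt_12 (Q : EuclideanSpace ℝ (Fin 2) → ℝ)
    (hQpos : ∀ x, 0 < Q x)
    (hQrad : ∀ x y : EuclideanSpace ℝ (Fin 2), ‖x‖ = ‖y‖ → Q x = Q y)
    (hQsmooth : ContDiff ℝ 2 Q)
    (hQL2 : Integrable (fun x => Q x ^ 2))
    (hQgrad : Integrable (fun x => ‖gradient Q x‖ ^ 2))
    (hQ4 : Integrable (fun x => Q x ^ 4))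
    (hpde : ∀ x, -lap2 Q x + Q x - Q x ^ 3 = 0)
    (astar : ℝ) (hastar : astar = ∫ x, Q x ^ 2)
    (w : EuclideanSpace ℝ (Fin 2) → ℝ) (hw : Integrable w)
    (hwe : ∀ x, w (-x) = w x)
    (hstab : ∀ u : EuclideanSpace ℝ (Fin 2) → ℝ, ContDiff ℝ (⊤ : ℕ∞) u →
      HasCompactSupport u → u ≠ 0 →
      0 < (∫ x, u x ^ 2) * (∫ x, ‖gradient u x‖ ^ 2)
        + (1 / 2) * ∫ x, ∫ y, u x ^ 2 * u y ^ 2 * w (x - y)) :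
    -astar ≤ ∫ x, w x := by
  simp_rw [norm_gradient] at hQgrad
  have hE := gagliardoNirenbergEnergy_nonneg_of_integrable
    (fun v => gagliardoNirenbergEnergy_nonneg_of_contDiff_one
      fun u => gagliardoNirenbergEnergy_nonneg_of_stable hw hstab)
    (hQsmooth.of_le one_le_two) hQL2 hQ4 hQgrad
  have hpos : 0 < ∫ x, Q x ^ 2 := by
    rw [integral_pos_iff_support_of_nonneg (fun x => sq_nonneg _) hQL2,
      Function.support_eq_univ fun x => pow_ne_zero 2 (hQpos x).ne']
    exact Measure.measure_univ_pos.2 (NeZero.ne _)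
  rw [gagliardoNirenbergEnergy,
    integral_norm_fderiv_sq_eq hQsmooth hQL2 hQgrad hQ4 hpde,
    integral_pow_four_eq hQsmooth hQL2 hQgrad hQ4 hpde, ← hastar] at hE
  rw [← hastar] at hpos
  have : 0 ≤ astar * (astar + ∫ x, w x) := by linarith
  linarith [nonneg_of_mul_nonneg_right this hpos]
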